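/- For every graph G with at least one vertex, ξ(G*) = ξ(G)/(1 − ξ(G)); in particular, ξ(G*) ≥ −1/2. -/

import Mathlib

/-!
Splitting an independent set of `G*` into its part `s` in `G` and its part `t` among the
pendant vertices, `s` must be independent and `t` disjoint from the copy of `s`. Hence
`I(G*, x) = ∑ₛ x^|s| (1 + x)^(n - |s|) = (1 + x)^n I(G, x / (1 + x))` for `x ≠ -1`
(`eval_indepPoly_corona`). The map `x ↦ x / (1 + x)` is an increasing bijection from `(-1, ∞)`
onto `(-∞, 1)` with inverse `y ↦ y / (1 - y)`, so it matches the largest roots, once it is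
known that `I(G, ·)` has a root in `[-1, 0)` and no nonnegative root (`isGreatest_xi`).

For the existence of that root: if `I(G, ·)` is positive on `[a, 0]`, then so is `I(H, ·)` for
every induced subgraph `H` (`indepEval_pos_of_subset`). This follows from the recurrence
`I(G, x) = I(G - v, x) + x I(G - N[v], x)`, evaluated at the largest root of `I(G - v, ·)`.
Were `I(G, ·)` free of roots in `[-1, 0]`, it would be positive there, and so would be
`I(K₁, x) = 1 + x`, which vanishes at `-1`.
-/

open Polynomial SimpleGraph

/-- A finset of vertices is independent: pairwise nonadjacent. -/
def IsIndepFinset {V : Type*} (G : SimpleGraph V) (s : Finset V) : Prop :=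
  ∀ u ∈ s, ∀ v ∈ s, ¬ G.Adj u v

open Classical in
/-- The independence polynomial of a finite graph, with real coefficients. -/
noncomputable def indepPoly {V : Type*} [Fintype V] (G : SimpleGraph V) : Polynomial ℝ :=
  ∑ s : Finset V, if IsIndepFinset G s then (X : Polynomial ℝ) ^ s.card else 0

/-- `xi G` : the largest real root of the independence polynomial of `G`. -/
noncomputable def xi {V : Type*} [Fintype V] (G : SimpleGraph V) : ℝ :=
  sSup {x : ℝ | (indepPoly G).eval x = 0}

/-- `Pre H G` (`H ⪯ G`) : `I(H,x) ≥ I(G,x)` for all `x ∈ [ξ(G), 0]`. -/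
def Pre {V W : Type*} [Fintype V] [Fintype W] (H : SimpleGraph W) (G : SimpleGraph V) : Prop :=
  ∀ x ∈ Set.Icc (xi G) 0, (indepPoly G).eval x ≤ (indepPoly H).eval x

/-- `SPre H G` (`H ≺ G`). -/
def SPre {V W : Type*} [Fintype V] [Fintype W] (H : SimpleGraph W) (G : SimpleGraph V) : Prop :=
  Pre H G ∧ indepPoly H ≠ indepPoly G

open Classical in
/-- A graph is well-covered if all maximal independent sets have the same size. -/
def WellCovered {V : Type*} (G : SimpleGraph V) : Prop :=
  ∀ s t : Finset V,
    IsIndepFinset G s → (∀ v ∉ s, ¬ IsIndepFinset G (insert v s)) →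
    IsIndepFinset G t → (∀ v ∉ t, ¬ IsIndepFinset G (insert v t)) →
    s.card = t.card

/-- A connected unicyclic graph: connected with as many edges as vertices. -/
def Unicyclic {V : Type*} [Fintype V] (G : SimpleGraph V) : Prop :=
  G.Connected ∧ G.edgeSet.ncard = Fintype.card V

/-- The graph star (corona with `K₁`) of `G`: each vertex `inl v` gets a pendant
vertex `inr v`. -/
def corona {V : Type*} (G : SimpleGraph V) : SimpleGraph (V ⊕ V) :=
  SimpleGraph.fromRel (fun a b =>
    match a, b with
    | Sum.inl u, Sum.inl v => G.Adj u v
    | Sum.inl u, Sum.inr v => u = v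
    | _, _ => False)

/-- `Ugraph n` (`U_n`, `n ≥ 3`): a triangle `0,1,2` with `n - 3` pendant vertices attached
to vertex `0`. -/
def Ugraph (n : ℕ) : SimpleGraph (Fin n) :=
  SimpleGraph.fromRel (fun i j => i.val = 0 ∨ (i.val = 1 ∧ j.val = 2))

/-- `Dgraph n` (`D_n`, `n ≥ 4`): a path `0,1,...,n-1` plus the chord `{0,2}`, i.e. a
triangle with a path on `n - 3` vertices attached. -/
def Dgraph (n : ℕ) : SimpleGraph (Fin n) :=
  SimpleGraph.fromRel (fun i j => j.val = i.val + 1 ∨ (i.val = 0 ∧ j.val = 2))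

/-- `starGraph n` (`S_n = K_{1,n-1}`): vertex `0` adjacent to all other vertices. -/
def starGraph (n : ℕ) : SimpleGraph (Fin n) :=
  SimpleGraph.fromRel (fun i _ => i.val = 0)

/-- `Mgraph n` (`M_n`, odd `n ≥ 5`): a triangle `0,1,2` with `(n-3)/2` paths of length two
attached at vertex `0`; the middle vertices are the odd indices `3,5,...,n-2` and the leaf
attached to middle vertex `i` is `i + 1`. -/
def Mgraph (n : ℕ) : SimpleGraph (Fin n) :=
  SimpleGraph.fromRel (fun i j =>
    (i.val = 0 ∧ (j.val ≤ 2 ∨ j.val % 2 = 1)) ∨ (i.val = 1 ∧ j.val = 2) ∨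
    (i.val % 2 = 1 ∧ 3 ≤ i.val ∧ j.val = i.val + 1))

/-- `SPgraph g k ℓ` (`G(g,k,ℓ)`, for `g ∈ {3,5}` and `k + ℓ ≥ 1`): a cycle on the vertices
`0,...,g-1`, a copy of `P_k*` on the vertices `g,...,g+2k-1` (path vertices at even offsets,
each followed by its pendant vertex) joined to the cycle vertex `0` by an edge to the
path end `g`, and a copy of `P_ℓ*` on the vertices `g+2k,...,g+2k+2ℓ-1` joined to the cycle
vertex `2` by an edge to the path end `g+2k`. -/
def SPgraph (g k ℓ : ℕ) : SimpleGraph (Fin (g + 2*k + 2*ℓ)) :=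
  SimpleGraph.fromRel (fun i j =>
    (i.val < g ∧ j.val < g ∧ (j.val = i.val + 1 ∨ (i.val = 0 ∧ j.val = g - 1))) ∨
    (i.val = 0 ∧ 0 < k ∧ j.val = g) ∨
    (g ≤ i.val ∧ i.val < g + 2*k ∧ (i.val - g) % 2 = 0 ∧
      (j.val = i.val + 1 ∨ (j.val = i.val + 2 ∧ j.val < g + 2*k))) ∨
    (i.val = 2 ∧ 0 < ℓ ∧ j.val = g + 2*k) ∨
    (g + 2*k ≤ i.val ∧ (i.val - (g + 2*k)) % 2 = 0 ∧
      (j.val = i.val + 1 ∨ j.val = i.val + 2)))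

/-- `Gtree n` (`G_{2n}`, `n ≥ 5`): the tree on `2n` vertices with path `v_1 … v_n` at
indices `0,…,n-1`, `z_1` at index `n`, `y_1, y_2` at `n+1, n+2`, `x_1, x_2` at `n+3, n+4`
(with `v_3 z_1`, `v_3 y_1`, `y_1 y_2`, `v_5 x_1`, `x_1 x_2` edges), and pendant vertices
`w_j` at index `n + j - 1` attached to `v_j` for `6 ≤ j ≤ n`. -/
def Gtree (n : ℕ) : SimpleGraph (Fin (2*n)) :=
  SimpleGraph.fromRel (fun a b =>
    (a.val + 1 = b.val ∧ b.val < n) ∨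
    (a.val = 2 ∧ (b.val = n ∨ b.val = n + 1)) ∨
    (a.val = n + 1 ∧ b.val = n + 2) ∨
    (a.val = 4 ∧ b.val = n + 3) ∨
    (a.val = n + 3 ∧ b.val = n + 4) ∨
    (5 ≤ a.val ∧ a.val < n ∧ b.val = n + a.val))

open Classical in
/-- The value at `x` of the independence polynomial of the subgraph of `G` induced on `S`. -/
noncomputable def indepEval {V : Type*} (G : SimpleGraph V) (S : Finset V) (x : ℝ) : ℝ :=
  ∑ s ∈ S.powerset, if IsIndepFinset G s then x ^ s.card else 0

lemma eval_indepPoly {V : Type*} [Fintype V] (G : SimpleGraph V) (x : ℝ) :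
    (indepPoly G).eval x = indepEval G Finset.univ x := by
  classical
  unfold indepPoly indepEval
  rw [Polynomial.eval_finsetSum, Finset.powerset_univ]
  refine Finset.sum_congr rfl fun s _ => ?_
  split_ifs <;> simp

lemma continuous_indepEval {V : Type*} (G : SimpleGraph V) (S : Finset V) :
    Continuous (indepEval G S) := by
  unfold indepEval
  refine continuous_finsetSum _ fun s _ => ?_
  split_ifs <;> fun_prop

lemma isIndepFinset_empty {V : Type*} (G : SimpleGraph V) : IsIndepFinset G ∅ := by
  simp [IsIndepFinset]

lemma one_le_indepEval {V : Type*} (G : SimpleGraph V) (S : Finset V) {x : ℝ} (hx : 0 ≤ x) :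
    1 ≤ indepEval G S x := by
  classical
  unfold indepEval
  have h := Finset.single_le_sum (s := S.powerset)
    (f := fun s : Finset V => if IsIndepFinset G s then x ^ s.card else 0)
    (fun s _ => by split_ifs <;> positivity) (Finset.empty_mem_powerset S)
  simpa [isIndepFinset_empty] using h

open Classical in
lemma isIndepFinset_insert {V : Type*} (G : SimpleGraph V) (v : V) (s : Finset V) :
    IsIndepFinset G (insert v s) ↔ IsIndepFinset G s ∧ ∀ u ∈ s, ¬ G.Adj v u := by
  unfold IsIndepFinset
  constructor
  · intro h
    exact ⟨fun u hu w hw => h u (Finset.mem_insert_of_mem hu) w (Finset.mem_insert_of_mem hw),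
      fun u hu => h v (Finset.mem_insert_self _ _) u (Finset.mem_insert_of_mem hu)⟩
  · rintro ⟨h1, h2⟩ u hu w hw
    rcases Finset.mem_insert.1 hu with rfl | hu' <;> rcases Finset.mem_insert.1 hw with rfl | hw'
    · exact G.irrefl
    · exact h2 w hw'
    · exact fun h => h2 u hu' h.symm
    · exact h1 u hu' w hw'

open Classical in
/-- The recurrence `I(G, x) = I(G - v, x) + x I(G - N[v], x)`. -/
lemma indepEval_insert {V : Type*} (G : SimpleGraph V) {v : V} {S : Finset V} (hv : v ∉ S)
    (x : ℝ) : indepEval G (insert v S) x =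
      indepEval G S x + x * indepEval G (S.filter fun u => ¬ G.Adj v u) x := by
  unfold indepEval
  rw [Finset.sum_powerset_insert hv, Finset.mul_sum]
  congr 1
  symm
  apply Finset.sum_subset_zero_on_sdiff
    (Finset.powerset_mono.2 (Finset.filter_subset _ S))
  · intro s hs
    rw [Finset.mem_sdiff, Finset.mem_powerset, Finset.mem_powerset] at hs
    rw [if_neg]
    intro h
    exact hs.2 fun u hu => Finset.mem_filter.2
      ⟨hs.1 hu, ((isIndepFinset_insert G v s).1 h).2 u hu⟩
  · intro s hs
    rw [Finset.mem_powerset] at hs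
    have hvs : v ∉ s := fun h => hv (Finset.filter_subset _ S (hs h))
    have h2 : ∀ u ∈ s, ¬ G.Adj v u := fun u hu => (Finset.mem_filter.1 (hs hu)).2
    by_cases h : IsIndepFinset G s
    · rw [if_pos h, if_pos ((isIndepFinset_insert G v s).2 ⟨h, h2⟩),
        Finset.card_insert_of_notMem hvs, pow_succ']
    · rw [if_neg h, if_neg (fun h' => h ((isIndepFinset_insert G v s).1 h').1), mul_zero]

/-- Positivity of the independence polynomial on `[a, 0]` passes to induced subgraphs. -/
lemma indepEval_pos_of_subset {V : Type*} (G : SimpleGraph V) (S : Finset V) :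
    ∀ a : ℝ, (∀ x ∈ Set.Icc a 0, 0 < indepEval G S x) →
      ∀ T ⊆ S, ∀ x ∈ Set.Icc a 0, 0 < indepEval G T x := by
  classical
  induction S using Finset.strongInduction with
  | H S ih =>
    intro a hS T hTS
    by_cases hT : T = S
    · rwa [hT]
    obtain ⟨v, hvS, hvT⟩ := Finset.exists_of_ssubset (hTS.ssubset_of_ne hT)
    have hlt : S.erase v ⊂ S := Finset.erase_ssubset hvS
    refine ih _ hlt a ?_ T (fun u hu => Finset.mem_erase.2 ⟨fun h => hvT (h ▸ hu), hTS hu⟩)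
    by_contra! hneg
    obtain ⟨c, hc, hcneg⟩ := hneg
    set Z : Set ℝ := Set.Icc a 0 ∩ {x | indepEval G (S.erase v) x ≤ 0} with hZ
    have hcomp : IsCompact Z :=
      isCompact_Icc.inter_right (isClosed_le (continuous_indepEval G _) continuous_const)
    -- `b` is the largest root of `I(G - v, ·)`, encoded as the last point where it is `≤ 0`
    obtain ⟨b, ⟨hb, hbneg⟩, hbmax⟩ := hcomp.exists_isGreatest ⟨c, hc, hcneg⟩
    have hb0 : b < 0 := by
      rcases hb.2.lt_or_eq with h | h
      · exact h
      · have := one_le_indepEval G (S.erase v) h.ge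
        have : indepEval G (S.erase v) b ≤ 0 := hbneg
        linarith
    have hpos : ∀ x ∈ Set.Ioo b 0,
        0 ≤ indepEval G ((S.erase v).filter fun u => ¬ G.Adj v u) x := by
      intro x hx
      refine (ih _ hlt x (fun y hy => ?_) _ (Finset.filter_subset _ _) x
        ⟨le_rfl, hx.2.le⟩).le
      by_contra! hy'
      have := hbmax ⟨⟨hb.1.trans (hx.1.le.trans hy.1), hy.2⟩, hy'⟩
      linarith [hx.1, hy.1]
    have hnn : 0 ≤ indepEval G ((S.erase v).filter fun u => ¬ G.Adj v u) b := by
      have hcl : closure (Set.Ioo b 0) ⊆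
          {x | 0 ≤ indepEval G ((S.erase v).filter fun u => ¬ G.Adj v u) x} :=
        closure_minimal hpos (isClosed_le continuous_const (continuous_indepEval G _))
      rw [closure_Ioo hb0.ne] at hcl
      exact hcl ⟨le_rfl, hb0.le⟩
    have hrec := indepEval_insert G (Finset.notMem_erase v S) b
    rw [Finset.insert_erase hvS] at hrec
    have h1 := hS b hb
    have h2 : indepEval G (S.erase v) b ≤ 0 := hbneg
    nlinarith [mul_nonneg (neg_nonneg.2 hb0.le) hnn]

lemma exists_root {V : Type*} [Fintype V] (G : SimpleGraph V) (h : 1 ≤ Fintype.card V) :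
    ∃ x ∈ Set.Icc (-1 : ℝ) 0, (indepPoly G).eval x = 0 := by
  classical
  obtain ⟨v⟩ : Nonempty V := Fintype.card_pos_iff.1 h
  by_contra! hne
  simp only [eval_indepPoly] at hne
  have hpos : ∀ x ∈ Set.Icc (-1 : ℝ) 0, 0 < indepEval G Finset.univ x := by
    intro x hx
    by_contra! hx'
    obtain ⟨y, hy, hy0⟩ := intermediate_value_Icc hx.2
      (continuous_indepEval G Finset.univ).continuousOn
      ⟨hx', zero_le_one.trans (one_le_indepEval G Finset.univ le_rfl)⟩
    exact hne y ⟨hx.1.trans hy.1, hy.2⟩ hy0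
  have hv := indepEval_pos_of_subset G _ _ hpos {v} (Finset.subset_univ _) (-1)
    ⟨le_rfl, by norm_num⟩
  have hins := indepEval_insert G (Finset.notMem_empty v) (-1)
  rw [insert_empty_eq, Finset.filter_empty] at hins
  linarith

/-- The supremum defining `xi` is attained, in `[-1, 0)`. -/
lemma isGreatest_xi {V : Type*} [Fintype V] (G : SimpleGraph V) (h : 1 ≤ Fintype.card V) :
    IsGreatest {x : ℝ | (indepPoly G).eval x = 0} (xi G) ∧ -1 ≤ xi G ∧ xi G < 0 := by
  obtain ⟨x, hx, hx0⟩ := exists_root G h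
  have hneg : ∀ y ∈ {x : ℝ | (indepPoly G).eval x = 0}, y < 0 := by
    intro y (hy : (indepPoly G).eval y = 0)
    by_contra! hy'
    have := one_le_indepEval G Finset.univ hy'
    rw [← eval_indepPoly] at this
    linarith
  have hbdd : BddAbove {x : ℝ | (indepPoly G).eval x = 0} := ⟨0, fun y hy => (hneg y hy).le⟩
  have hcl : IsClosed {x : ℝ | (indepPoly G).eval x = 0} :=
    isClosed_eq (indepPoly G).continuous continuous_const
  have hmem := hcl.csSup_mem ⟨x, hx0⟩ hbdd
  exact ⟨⟨hmem, fun y hy => le_csSup hbdd hy⟩, hx.1.trans (le_csSup hbdd hx0), hneg _ hmem⟩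

open Classical in
lemma isIndepFinset_corona {V : Type*} [Fintype V] (G : SimpleGraph V) (s t : Finset V) :
    IsIndepFinset (corona G) (s.disjSum t) ↔ IsIndepFinset G s ∧ t ∈ sᶜ.powerset := by
  simp only [IsIndepFinset, corona, SimpleGraph.fromRel_adj, Finset.mem_powerset]
  constructor
  · intro h
    refine ⟨fun u hu v hv huv => h (.inl u) (by simpa using hu) (.inl v) (by simpa using hv)
      ⟨by simpa using huv.ne, Or.inl huv⟩, fun u hu => Finset.mem_compl.2 fun hus => ?_⟩
    exact h (.inl u) (by simpa using hus) (.inr u) (by simpa using hu) ⟨by simp, Or.inl rfl⟩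
  · rintro ⟨h1, h2⟩ (u | u) hu (v | v) hv ⟨-, hadj⟩ <;> simp at hu hv hadj
    · exact h1 u hu v hv (hadj.elim id fun h => h.symm)
    · subst hadj
      exact Finset.mem_compl.1 (h2 hv) hu
    · subst hadj
      exact Finset.mem_compl.1 (h2 hu) hv

/-- The identity `I(G*, x) = (1 + x)^n I(G, x / (1 + x))`. -/
lemma eval_indepPoly_corona {V : Type*} [Fintype V] (G : SimpleGraph V) {x : ℝ}
    (hx : 1 + x ≠ 0) : (indepPoly (corona G)).eval x =
      (1 + x) ^ Fintype.card V * (indepPoly G).eval (x / (1 + x)) := by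
  classical
  rw [eval_indepPoly, eval_indepPoly]
  unfold indepEval
  rw [Finset.powerset_univ, Finset.powerset_univ, Finset.mul_sum,
    ← Finset.sumEquiv.symm.toEquiv.sum_comp, Fintype.sum_prod_type]
  refine Finset.sum_congr rfl fun s _ => ?_
  have hsum : ∑ t ∈ sᶜ.powerset, x ^ t.card = (1 + x) ^ sᶜ.card := by
    simpa [add_comm] using Finset.sum_pow_mul_eq_add_pow x 1 sᶜ
  calc _ = ∑ t : Finset V, if IsIndepFinset G s ∧ t ∈ sᶜ.powerset
            then x ^ (s.card + t.card) else 0 := by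
        refine Finset.sum_congr rfl fun t _ => ?_
        change (if IsIndepFinset (corona G) (s.disjSum t) then x ^ (s.disjSum t).card else 0) = _
        rw [Finset.card_disjSum]
        simp only [isIndepFinset_corona]
    _ = _ := by
        by_cases hs : IsIndepFinset G s
        · simp only [hs, true_and, if_true, pow_add]
          rw [Finset.sum_ite_mem, Finset.univ_inter, ← Finset.mul_sum, hsum, div_pow,
            ← Finset.card_add_card_compl s, pow_add]
          field_simp
        · simp [hs]

/-- For every graph `G` with at least one vertex,
`ξ(G*) = ξ(G)/(1 − ξ(G))`; in particular `ξ(G*) ≥ −1/2`. -/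
theorem stmt5 {V : Type*} [Fintype V] (G : SimpleGraph V) (h : 1 ≤ Fintype.card V) :
    xi (corona G) = xi G / (1 - xi G) ∧ (-(1/2) : ℝ) ≤ xi (corona G) := by
  obtain ⟨⟨hroot, hmax⟩, hge, hlt⟩ := isGreatest_xi G h
  have hpos : 0 < 1 - xi G := by linarith
  have hhalf : (-(1/2) : ℝ) ≤ xi G / (1 - xi G) := by
    rw [le_div_iff₀ hpos]
    linarith
  have hinv : 1 + xi G / (1 - xi G) = 1 / (1 - xi G) := by
    field_simp
    ring
  have hgreatest : IsGreatest {x : ℝ | (indepPoly (corona G)).eval x = 0}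
      (xi G / (1 - xi G)) := by
    constructor
    · have hne : 1 + xi G / (1 - xi G) ≠ 0 := by
        rw [hinv]
        positivity
      have harg : xi G / (1 - xi G) / (1 + xi G / (1 - xi G)) = xi G := by
        rw [hinv]
        field_simp
      change (indepPoly (corona G)).eval _ = 0
      rw [eval_indepPoly_corona G hne, harg, show (indepPoly G).eval (xi G) = 0 from hroot,
        mul_zero]
    · intro y (hy : (indepPoly (corona G)).eval y = 0)
      rcases le_or_gt y (-(1/2)) with hy' | hy'
      · exact hy'.trans hhalf
      · have hy1 : 0 < 1 + y := by linarith
        rw [eval_indepPoly_corona G hy1.ne'] at hy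
        have hle := hmax ((mul_eq_zero.1 hy).resolve_left (pow_pos hy1 _).ne')
        rw [div_le_iff₀ hy1] at hle
        rw [le_div_iff₀ hpos]
        linarith
  have heq : xi (corona G) = xi G / (1 - xi G) := hgreatest.csSup_eq
  exact ⟨heq, heq ▸ hhalf⟩
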